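/- Fourth-order four-body error term (paper eq. A19c): for pairwise distinct indices i, j, k, l and any phase-space point (x,p) with r_ij ≠ 0, r_ik ≠ 0 and r_jl ≠ 0, the left-nested canonical Poisson bracket satisfies {{{{V_ij, T}, V_ik}, T}, V_jl}(x,p) = (G³ (m i)(m j)(m k)(m l) / (r_ij⁵ r_ik³ r_jl³)) · ( 3 (x_ij · x_ik)(x_ij · x_jl) − r_ij² (x_ik · x_jl) ). -/

import Mathlib

/-!
Write `Γ(A, B) = ∑ₖ ⟪∇_{xₖ} A, ∇_{xₖ} B⟫ / mₖ`. If `A` and `B` do not depend on the momenta, then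
`{A, T} = ∑ₖ ⟪∇_{xₖ} A, pₖ⟫ / mₖ` is linear in the momenta, so that `{{A, T}, B} = -Γ(A, B)`, which
is again free of momenta. Hence `{{{{A, T}, B}, T}, C} = Γ(Γ(A, B), C)`. For pair potentials on
distinct indices, only particle `i` contributes to `Γ(V_ij, V_ik)`, and only particle `j` to the
outer `Γ`; what remains is the gradient of `⟪z, b⟫ / ‖z‖³`.
-/

open scoped RealInnerProductSpace BigOperators

noncomputable section

/-- Three-dimensional Euclidean space. -/
abbrev E3 : Type := EuclideanSpace ℝ (Fin 3)

/-- Phase space for `N` particles: positions and momenta. -/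
abbrev Phase (N : ℕ) : Type := (Fin N → E3) × (Fin N → E3)

/-- Gradient of a phase-space function with respect to the `k`-th position. -/
def gradPos {N : ℕ} (A : Phase N → ℝ) (k : Fin N) (w : Phase N) : E3 :=
  gradient (fun y => A (Function.update w.1 k y, w.2)) (w.1 k)

/-- Gradient of a phase-space function with respect to the `k`-th momentum. -/
def gradMom {N : ℕ} (A : Phase N → ℝ) (k : Fin N) (w : Phase N) : E3 :=
  gradient (fun y => A (w.1, Function.update w.2 k y)) (w.2 k)

/-- Canonical Poisson bracket of two phase-space functions. -/
def poisson {N : ℕ} (A B : Phase N → ℝ) (w : Phase N) : ℝ :=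
  ∑ k, (⟪gradPos A k w, gradMom B k w⟫ - ⟪gradMom A k w, gradPos B k w⟫)

/-- Kinetic energy `T = Σ_i ‖p_i‖²/(2 m_i)`. -/
def kinetic {N : ℕ} (m : Fin N → ℝ) (w : Phase N) : ℝ :=
  ∑ i, ‖w.2 i‖ ^ 2 / (2 * m i)

/-- Pair potential `V_ij = −G m_i m_j / ‖x_i − x_j‖`. -/
def pairPot {N : ℕ} (G : ℝ) (m : Fin N → ℝ) (i j : Fin N) (w : Phase N) : ℝ :=
  -(G * m i * m j) / ‖w.1 i - w.1 j‖

section Gradient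

variable {F : Type*} [NormedAddCommGroup F] [InnerProductSpace ℝ F] [CompleteSpace F]

lemma hasGradientAt_const_mul {f : F → ℝ} {f' z : F} (hf : HasGradientAt f f' z) (c : ℝ) :
    HasGradientAt (fun z => c * f z) (c • f') z := by
  rw [hasGradientAt_iff_hasFDerivAt, map_smul]
  exact hf.hasFDerivAt.const_mul c

lemma hasGradientAt_mul {f g : F → ℝ} {f' g' z : F} (hf : HasGradientAt f f' z)
    (hg : HasGradientAt g g' z) :
    HasGradientAt (fun z => f z * g z) (f z • g' + g z • f') z := by
  rw [hasGradientAt_iff_hasFDerivAt, map_add, map_smul, map_smul]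
  exact hf.hasFDerivAt.mul hg.hasFDerivAt

lemma hasGradientAt_comp_sub {f : F → ℝ} {f' z a : F} (hf : HasGradientAt f f' (z - a)) :
    HasGradientAt (fun z => f (z - a)) f' z :=
  (hasFDerivAt_comp_sub a).2 hf.hasFDerivAt

lemma hasGradientAt_comp_const_sub {f : F → ℝ} {f' z a : F} (hf : HasGradientAt f f' (a - z)) :
    HasGradientAt (fun z => f (a - z)) (-f') z := by
  rw [hasGradientAt_iff_hasFDerivAt, map_neg]
  have h := hf.hasFDerivAt.comp z ((hasFDerivAt_id z).const_sub a)
  rwa [ContinuousLinearMap.comp_neg, ContinuousLinearMap.comp_id] at h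

lemma hasGradientAt_inner_left (b z : F) : HasGradientAt (fun z => ⟪b, z⟫) b z :=
  (innerSL ℝ b).hasFDerivAt

lemma hasGradientAt_inner_right (b z : F) : HasGradientAt (fun z => ⟪z, b⟫) b z := by
  simpa only [real_inner_comm] using hasGradientAt_inner_left b z

lemma hasGradientAt_norm_sq (z : F) : HasGradientAt (fun z => ‖z‖ ^ 2) ((2 : ℝ) • z) z := by
  rw [hasGradientAt_iff_hasFDerivAt, map_smul, ofNat_smul_eq_nsmul]
  exact (hasStrictFDerivAt_norm_sq z).hasFDerivAt

lemma hasGradientAt_norm {z : F} (hz : z ≠ 0) : HasGradientAt (fun z => ‖z‖) (‖z‖⁻¹ • z) z := by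
  have h := (hasGradientAt_norm_sq z).hasFDerivAt.sqrt (by simpa using hz)
  have hcoeff : 1 / (2 * ‖z‖) * 2 = ‖z‖⁻¹ := by ring
  simp only [Real.sqrt_sq (norm_nonneg _), ← map_smul, smul_smul, hcoeff] at h
  exact h

lemma hasGradientAt_norm_zpow {z : F} (hz : z ≠ 0) (n : ℤ) :
    HasGradientAt (fun z => ‖z‖ ^ n) ((n * ‖z‖ ^ (n - 2)) • z) z := by
  have hz' : ‖z‖ ≠ 0 := norm_ne_zero_iff.2 hz
  have h := (hasDerivAt_zpow n ‖z‖ (.inl hz')).comp_hasFDerivAt z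
    (hasGradientAt_norm hz).hasFDerivAt
  rw [← map_smul, smul_smul, mul_assoc, ← zpow_sub_one₀ hz', sub_sub] at h
  exact h

lemma hasGradientAt_inner_mul_norm_zpow {z : F} (hz : z ≠ 0) (b : F) (n : ℤ) :
    HasGradientAt (fun z => ⟪z, b⟫ * ‖z‖ ^ n)
      (⟪z, b⟫ • (n * ‖z‖ ^ (n - 2)) • z + ‖z‖ ^ n • b) z :=
  hasGradientAt_mul (hasGradientAt_inner_right b z) (hasGradientAt_norm_zpow hz n)

lemma hasGradientAt_inv_norm {z : F} (hz : z ≠ 0) :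
    HasGradientAt (fun z => ‖z‖⁻¹) (-(‖z‖ ^ 3)⁻¹ • z) z := by
  convert hasGradientAt_norm_zpow hz (-1) using 2 <;> norm_num [zpow_neg, zpow_ofNat]

lemma hasGradientAt_inner_div_norm_pow_three {z : F} (hz : z ≠ 0) (b : F) :
    HasGradientAt (fun z => ⟪z, b⟫ / ‖z‖ ^ 3)
      (-(‖z‖ ^ 5)⁻¹ • ((3 * ⟪z, b⟫) • z - ‖z‖ ^ 2 • b)) z := by
  have hz' : ‖z‖ ≠ 0 := norm_ne_zero_iff.2 hz
  have hpow_three (z : F) : ‖z‖ ^ (-3 : ℤ) = (‖z‖ ^ 3)⁻¹ := by simp only [zpow_neg, zpow_ofNat]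
  have hpow_five : ‖z‖ ^ (-3 - 2 : ℤ) = (‖z‖ ^ 5)⁻¹ := by norm_num [zpow_neg, zpow_ofNat]
  have h := hasGradientAt_inner_mul_norm_zpow hz b (-3)
  simp only [hpow_three, hpow_five, ← div_eq_mul_inv] at h
  convert h using 1
  match_scalars <;> field_simp

lemma gradient_sum_update {ι : Type*} [Fintype ι] [DecidableEq ι] (f : ι → F → ℝ) (p : ι → F)
    (k : ι) (z : F) :
    gradient (fun y => ∑ a, f a (Function.update p k y a)) z = gradient (f k) z := by
  have split_off (y : F) : ∑ a, f a (Function.update p k y a) =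
      f k y + ∑ a ∈ Finset.univ.erase k, f a (p a) := by
    rw [← Finset.add_sum_erase _ _ (Finset.mem_univ k), Function.update_self]
    congr 1
    refine Finset.sum_congr rfl fun a ha => ?_
    rw [Function.update_of_ne (Finset.ne_of_mem_erase ha)]
  simp only [split_off, gradient, fderiv_add_const]

end Gradient

section PhaseSpace

variable {N : ℕ} (m : Fin N → ℝ) {A B C : Phase N → ℝ} {k : Fin N} {w : Phase N}

/-- Functions on phase space that do not depend on the `k`-th position: to these, particle `k`
contributes nothing in a sum of products of position gradients. -/
def PositionFree (k : Fin N) (A : Phase N → ℝ) : Prop :=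
  ∀ w y, A (Function.update w.1 k y, w.2) = A w

/-- Functions on phase space that depend on the positions only, such as potentials: for these,
brackets alternating with `T` reduce to position gradients. -/
def MomentumFree (A : Phase N → ℝ) : Prop :=
  ∀ x p q, A (x, p) = A (x, q)

lemma gradPos_neg : gradPos (-A) k w = -gradPos A k w := by
  simp [gradPos, gradient, fderiv_fun_neg]

lemma PositionFree.gradPos_eq_zero (hA : PositionFree k A) : gradPos A k w = 0 := by
  simp only [gradPos, hA w, gradient_fun_const]

lemma PositionFree.gradPos_update (hA : PositionFree k A) (a : Fin N) (y : E3) :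
    gradPos A a (Function.update w.1 k y, w.2) = gradPos A a w := by
  rcases eq_or_ne a k with rfl | hak
  · rw [hA.gradPos_eq_zero, hA.gradPos_eq_zero]
  · have h (z : E3) : A (Function.update (Function.update w.1 k y) a z, w.2) =
        A (Function.update w.1 a z, w.2) := by
      rw [Function.update_comm hak.symm]
      exact hA (Function.update w.1 a z, w.2) y
    simp only [gradPos, h, Function.update_of_ne hak]

lemma gradPos_kinetic : gradPos (kinetic m) k w = 0 :=
  PositionFree.gradPos_eq_zero fun _ _ => rfl

lemma gradMom_kinetic : gradMom (kinetic m) k w = (m k)⁻¹ • w.2 k := by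
  have h := (hasGradientAt_const_mul (hasGradientAt_norm_sq (w.2 k)) (2 * m k)⁻¹).gradient
  simp only [gradMom, kinetic]
  rw [gradient_sum_update (fun a y => ‖y‖ ^ 2 / (2 * m a))]
  simp only [div_eq_inv_mul, h, smul_smul]
  congr 1
  field_simp

lemma poisson_kinetic :
    poisson A (kinetic m) w = ∑ a, ⟪(m a)⁻¹ • gradPos A a w, w.2 a⟫ := by
  simp only [poisson, gradPos_kinetic, gradMom_kinetic, inner_zero_right, sub_zero,
    real_inner_smul_left, real_inner_smul_right]

/-- The carré du champ `Γ(A, B) = ∑ₖ ⟪∇_{xₖ} A, ∇_{xₖ} B⟫ / mₖ` of the mass-weighted metric on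
configuration space, through which the nested brackets of potentials with `T` are expressed. It is
taken of functions on phase space, so that it can be compared with `poisson`. -/
def carreDuChamp (A B : Phase N → ℝ) (w : Phase N) : ℝ :=
  ∑ a, (m a)⁻¹ * ⟪gradPos A a w, gradPos B a w⟫

namespace MomentumFree

lemma neg (hA : MomentumFree A) : MomentumFree (-A) :=
  fun x p q => congrArg Neg.neg (hA x p q)

lemma gradMom_eq_zero (hA : MomentumFree A) : gradMom A k w = 0 := by
  simp only [gradMom, hA w.1 _ w.2, gradient_fun_const]

lemma gradPos_eq (hA : MomentumFree A) (x p q : Fin N → E3) :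
    gradPos A k (x, p) = gradPos A k (x, q) := by
  simp only [gradPos, hA _ p q]

lemma gradMom_poisson_kinetic (hA : MomentumFree A) :
    gradMom (poisson A (kinetic m)) k w = (m k)⁻¹ • gradPos A k w := by
  simp only [gradMom, poisson_kinetic, hA.gradPos_eq w.1 _ w.2]
  rw [gradient_sum_update (fun a y => ⟪(m a)⁻¹ • gradPos A a w, y⟫)]
  exact (hasGradientAt_inner_left _ _).gradient

lemma poisson_poisson_kinetic (hA : MomentumFree A) (hB : MomentumFree B) :
    poisson (poisson A (kinetic m)) B = -carreDuChamp m A B := by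
  funext w
  simp only [poisson, hA.gradMom_poisson_kinetic m, hB.gradMom_eq_zero, inner_zero_right, zero_sub,
    real_inner_smul_left, Finset.sum_neg_distrib, carreDuChamp, Pi.neg_apply]

end MomentumFree

lemma positionFree_carreDuChamp (hA : PositionFree k A) (hB : PositionFree k B) :
    PositionFree k (carreDuChamp m A B) := fun w y => by
  simp only [carreDuChamp, hA.gradPos_update, hB.gradPos_update]

lemma momentumFree_carreDuChamp (hA : MomentumFree A) (hB : MomentumFree B) :
    MomentumFree (carreDuChamp m A B) := fun x p q => by
  simp only [carreDuChamp, hA.gradPos_eq x p q, hB.gradPos_eq x p q]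

lemma carreDuChamp_neg_left : carreDuChamp m (-A) B = -carreDuChamp m A B := by
  funext w
  simp only [carreDuChamp, gradPos_neg, inner_neg_left, mul_neg, Finset.sum_neg_distrib,
    Pi.neg_apply]

lemma iterated_poisson_eq_carreDuChamp (hA : MomentumFree A) (hB : MomentumFree B)
    (hC : MomentumFree C) :
    poisson (poisson (poisson (poisson A (kinetic m)) B) (kinetic m)) C =
      carreDuChamp m (carreDuChamp m A B) C := by
  rw [hA.poisson_poisson_kinetic m hB,
    (momentumFree_carreDuChamp m hA hB).neg.poisson_poisson_kinetic m hC,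
    carreDuChamp_neg_left, neg_neg]

lemma carreDuChamp_eq_single (h : ∀ a ≠ k, PositionFree a A ∨ PositionFree a B) :
    carreDuChamp m A B w = (m k)⁻¹ * ⟪gradPos A k w, gradPos B k w⟫ := by
  refine Fintype.sum_eq_single k fun a ha => ?_
  rcases h a ha with hA | hB
  · rw [hA.gradPos_eq_zero, inner_zero_left, mul_zero]
  · rw [hB.gradPos_eq_zero, inner_zero_right, mul_zero]

end PhaseSpace

section PairPotential

variable {N : ℕ} (G : ℝ) (m : Fin N → ℝ) {i j k : Fin N} {w : Phase N}

lemma momentumFree_pairPot (i j : Fin N) : MomentumFree (pairPot G m i j) :=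
  fun _ _ _ => rfl

lemma positionFree_pairPot (hki : k ≠ i) (hkj : k ≠ j) : PositionFree k (pairPot G m i j) :=
  fun w y => by
    simp only [pairPot, Function.update_of_ne hki.symm, Function.update_of_ne hkj.symm]

lemma gradPos_pairPot_left (h : w.1 i ≠ w.1 j) :
    gradPos (pairPot G m i j) i w =
      (G * m i * m j / ‖w.1 i - w.1 j‖ ^ 3) • (w.1 i - w.1 j) := by
  have hij : i ≠ j := ne_of_apply_ne w.1 h
  have hgrad := hasGradientAt_comp_sub
    (hasGradientAt_const_mul (hasGradientAt_inv_norm (sub_ne_zero.2 h)) (-(G * m i * m j)))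
  simp only [gradPos, pairPot, Function.update_self, Function.update_of_ne hij.symm,
    div_eq_mul_inv]
  rw [hgrad.gradient, smul_smul, neg_mul_neg]

lemma carreDuChamp_pairPot (hi : m i ≠ 0) (hjk : j ≠ k) (h : w.1 i ≠ w.1 j)
    (h' : w.1 i ≠ w.1 k) :
    carreDuChamp m (pairPot G m i j) (pairPot G m i k) w =
      G ^ 2 * m i * m j * m k * ⟪w.1 i - w.1 j, w.1 i - w.1 k⟫ /
        (‖w.1 i - w.1 j‖ ^ 3 * ‖w.1 i - w.1 k‖ ^ 3) := by
  have only_i (a : Fin N) (hai : a ≠ i) :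
      PositionFree a (pairPot G m i j) ∨ PositionFree a (pairPot G m i k) := by
    rcases eq_or_ne a j with rfl | haj
    · exact .inr (positionFree_pairPot G m hai hjk)
    · exact .inl (positionFree_pairPot G m hai haj)
  rw [carreDuChamp_eq_single m only_i, gradPos_pairPot_left G m h,
    gradPos_pairPot_left G m h', real_inner_smul_left, real_inner_smul_right]
  field_simp

lemma gradPos_carreDuChamp_pairPot (hi : m i ≠ 0) (hjk : j ≠ k) (h : w.1 i ≠ w.1 j)
    (h' : w.1 i ≠ w.1 k) :
    gradPos (carreDuChamp m (pairPot G m i j) (pairPot G m i k)) j w =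
      (G ^ 2 * m i * m j * m k / (‖w.1 i - w.1 j‖ ^ 5 * ‖w.1 i - w.1 k‖ ^ 3)) •
        ((3 * ⟪w.1 i - w.1 j, w.1 i - w.1 k⟫) • (w.1 i - w.1 j) -
          ‖w.1 i - w.1 j‖ ^ 2 • (w.1 i - w.1 k)) := by
  have hij : i ≠ j := ne_of_apply_ne w.1 h
  have eventually_eq : (fun y => carreDuChamp m (pairPot G m i j) (pairPot G m i k)
      (Function.update w.1 j y, w.2)) =ᶠ[nhds (w.1 j)] fun y =>
      G ^ 2 * m i * m j * m k / ‖w.1 i - w.1 k‖ ^ 3 *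
        (⟪w.1 i - y, w.1 i - w.1 k⟫ / ‖w.1 i - y‖ ^ 3) := by
    filter_upwards [eventually_ne_nhds h.symm] with y hy
    rw [carreDuChamp_pairPot G m hi hjk] <;>
      simp only [Function.update_self, Function.update_of_ne hij, Function.update_of_ne hjk.symm]
    · ring
    · exact hy.symm
    · exact h'
  have hgrad := hasGradientAt_comp_const_sub (hasGradientAt_const_mul
    (hasGradientAt_inner_div_norm_pow_three (sub_ne_zero.2 h) (w.1 i - w.1 k))
    (G ^ 2 * m i * m j * m k / ‖w.1 i - w.1 k‖ ^ 3))
  rw [gradPos, eventually_eq.gradient_eq, hgrad.gradient, neg_smul, smul_neg, neg_neg, smul_smul]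
  congr 1
  ring

end PairPotential

/-- Fourth-order four-body error term (paper eq. A19c):
`{{{{V_ij,T},V_ik},T},V_jl}
  = (G³ m_i m_j m_k m_l / (r_ij⁵ r_ik³ r_jl³))
    (3 (x_ij·x_ik)(x_ij·x_jl) − r_ij² (x_ik·x_jl))`. -/
theorem fourth_order_four_body {N : ℕ} (G : ℝ) (hG : 0 < G)
    (m : Fin N → ℝ) (hm : ∀ i, 0 < m i) (i j k l : Fin N)
    (hij : i ≠ j) (hik : i ≠ k) (hil : i ≠ l) (hjk : j ≠ k) (hjl : j ≠ l)
    (hkl : k ≠ l) (w : Phase N)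
    (hrij : ‖w.1 i - w.1 j‖ ≠ 0) (hrik : ‖w.1 i - w.1 k‖ ≠ 0)
    (hrjl : ‖w.1 j - w.1 l‖ ≠ 0) (xij xik xjl : E3)
    (hxij : xij = w.1 i - w.1 j) (hxik : xik = w.1 i - w.1 k)
    (hxjl : xjl = w.1 j - w.1 l) :
    poisson (poisson (poisson (poisson (pairPot G m i j) (kinetic m))
        (pairPot G m i k)) (kinetic m)) (pairPot G m j l) w =
      G ^ 3 * m i * m j * m k * m l /
          (‖xij‖ ^ 5 * ‖xik‖ ^ 3 * ‖xjl‖ ^ 3) *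
        (3 * ⟪xij, xik⟫ * ⟪xij, xjl⟫ - ‖xij‖ ^ 2 * ⟪xik, xjl⟫) := by
  have hxij0 : w.1 i ≠ w.1 j := sub_ne_zero.1 (norm_ne_zero_iff.1 hrij)
  have hxik0 : w.1 i ≠ w.1 k := sub_ne_zero.1 (norm_ne_zero_iff.1 hrik)
  have hxjl0 : w.1 j ≠ w.1 l := sub_ne_zero.1 (norm_ne_zero_iff.1 hrjl)
  have hmj : m j ≠ 0 := (hm j).ne'
  have only_j (a : Fin N) (haj : a ≠ j) :
      PositionFree a (carreDuChamp m (pairPot G m i j) (pairPot G m i k)) ∨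
        PositionFree a (pairPot G m j l) := by
    rcases eq_or_ne a l with rfl | hal
    · exact .inl (positionFree_carreDuChamp m (positionFree_pairPot G m hil.symm haj)
        (positionFree_pairPot G m hil.symm hkl.symm))
    · exact .inr (positionFree_pairPot G m haj hal)
  rw [iterated_poisson_eq_carreDuChamp m (momentumFree_pairPot G m i j)
      (momentumFree_pairPot G m i k) (momentumFree_pairPot G m j l),
    carreDuChamp_eq_single m only_j,
    gradPos_carreDuChamp_pairPot G m (hm i).ne' hjk hxij0 hxik0,
    gradPos_pairPot_left G m hxjl0, ← hxij, ← hxik, ← hxjl]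
  simp only [real_inner_smul_left, real_inner_smul_right, inner_sub_left]
  field_simp
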